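/- Let w be a finite word and let u_1, …, u_t be pairwise non-conjugate primitive words such that u_i² is a factor of w for each i. Then RP(w), the number of distinct factors of w that are rational powers of exponent ≥ 2 of some nonempty word whose primitive root is conjugate to some u_i, satisfies RP(w) ≤ Σ_{i=1}^t G(ℓ_i, m_i), where ℓ_i = |u_i|, m_i = M(u_i), and G(ℓ,m) = m(m+1)/2 if m ≤ ℓ and G(ℓ,m) = ℓ(ℓ+1)/2 + ℓ(m−ℓ) if m > ℓ. In particular, if u_1, …, u_t represent all conjugacy classes of primitive words whose square is a factor of w, this bounds the total number of distinct rational power factors of w. -/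

import Mathlib

/-!
Fix one of the words `u`, of length `ℓ`, and put `m = M(u)`. Every word counted for `u` is a factor
of `u^ω` of length at least `2ℓ`. For each `n`, let `P n` be the set of residues `s < ℓ` for which
the length-`n` factor of `u^ω` starting at `s` is a factor of `w`; there are at most `|P n|` counted
words of length `n`.

If `s ∈ P (n+1)` then `s` and `s + 1 mod ℓ` both lie in `P n`. Hence, if `P (n+1) = P n`, then `P n`
is stable under the cyclic shift and so is empty or everything. Therefore `|P n|` strictly decreases
with `n` from the first length at which some residue is missing until it reaches `0`
(`card_goodPos_succ_lt`). By pigeonhole the small-circuit condition fails for some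
`q ∈ [ℓ, ℓ + m]`, so some residue is missing at length `ℓ + m + 1` (`exists_missing`), and
`|P n| ≤ min ℓ (2ℓ + m - n)` follows. Summing over `n ≥ 2ℓ` gives `G ℓ m` (`sum_min_le_G`), and a
union bound over the words `u_i` finishes the proof.
-/


/-- `wpow u k` is the concatenation of `k` copies of the word `u`. -/
def wpow {α : Type*} (u : List α) : ℕ → List α
  | 0 => []
  | n + 1 => u ++ wpow u n

/-- A nonempty word is primitive if it is not a `k`-th power, `k ≥ 2`, of any word. -/
def Primitive {α : Type*} (u : List α) : Prop :=
  u ≠ [] ∧ ∀ (v : List α) (k : ℕ), 2 ≤ k → u ≠ wpow v k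

/-- `v` is a rational power of exponent at least 2 of the nonempty word `p`:
`v = p^k p'` with `k ≥ 2` an integer and `p'` a (possibly empty) proper prefix of `p`. -/
def IsRatPow {α : Type*} (p v : List α) : Prop :=
  p ≠ [] ∧ ∃ (k : ℕ) (p' : List α), 2 ≤ k ∧ p' <+: p ∧ p' ≠ p ∧ v = wpow p k ++ p'

/-- Two words are conjugate. -/
def Conj {α : Type*} (u v : List α) : Prop :=
  ∃ x y, u = x ++ y ∧ v = y ++ x

/-- The set of factors of a word. -/
def Fac {α : Type*} (w : List α) : Set (List α) := {v | v <:+: w}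

/-- `PerFac u i` is the set `[u]_i` of length-`i` factors of the infinite periodic
word `u^ω` (equivalently, of `u^(i+1)` when `u` is nonempty). -/
def PerFac {α : Type*} (u : List α) (i : ℕ) : Set (List α) :=
  {v | v.length = i ∧ v <:+: wpow u (i + 1)}

/-- The small-circuit condition `SC_w(u,q)`: `q ≥ |u|`, `[u]_q ⊆ Fac(w)` and
`[u]_{q+1} ⊆ Fac(w)`. -/
def SC {α : Type*} (w u : List α) (q : ℕ) : Prop :=
  u.length ≤ q ∧ PerFac u q ⊆ Fac w ∧ PerFac u (q + 1) ⊆ Fac w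

/-- `M(u)`: the number of integers `q` for which `SC_w(u,q)` holds. -/
noncomputable def Mnum {α : Type*} (w u : List α) : ℕ :=
  Set.ncard {q : ℕ | SC w u q}

/-- `QClass_w(u)`: the set of factors of `w` that are rational powers of exponent
at least 2 of some conjugate of `u`. -/
def QClass {α : Type*} (w u : List α) : Set (List α) :=
  {v | v <:+: w ∧ ∃ p, Conj u p ∧ IsRatPow p v}

/-- `RP(w)`: the number of distinct factors of `w` that are rational powers of
exponent at least 2 of some nonempty word. -/
noncomputable def RP {α : Type*} (w : List α) : ℕ :=
  Set.ncard {v | v <:+: w ∧ ∃ p, IsRatPow p v}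

/-- The bound function `G`. -/
def G (l m : ℕ) : ℕ :=
  if m ≤ l then m * (m + 1) / 2 else l * (l + 1) / 2 + l * (m - l)

/-! ### Powers of words and the infinite periodic word -/

theorem wpow_length {α : Type*} (u : List α) (k : ℕ) : (wpow u k).length = k * u.length := by
  induction k with
  | zero => simp [wpow]
  | succ k ih => simp [wpow, ih]; ring

theorem wpow_add {α : Type*} (u : List α) (a b : ℕ) : wpow u (a + b) = wpow u a ++ wpow u b := by
  induction a with
  | zero => simp [wpow]
  | succ a ih => rw [Nat.succ_add]; simp [wpow, ih]

theorem wpow_wpow {α : Type*} (u : List α) (k j : ℕ) : wpow (wpow u k) j = wpow u (j * k) := by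
  induction j with
  | zero => simp [wpow]
  | succ j ih => rw [wpow, ih, ← wpow_add]; congr 1; ring

theorem wpow_conj {α : Type*} (x y : List α) (k : ℕ) :
    y ++ wpow (x ++ y) k ++ x = wpow (y ++ x) (k + 1) := by
  induction k with
  | zero => simp [wpow]
  | succ k ih =>
    rw [show wpow (y ++ x) (k + 1 + 1) = (y ++ x) ++ wpow (y ++ x) (k + 1) from rfl, ← ih]
    simp [wpow]

/-- The `j`-th letter of the infinite periodic word `u^ω`. -/
def letter {α : Type*} (u : List α) (h : u ≠ []) (j : ℕ) : α :=
  u[j % u.length]'(Nat.mod_lt _ (List.length_pos_iff.2 h))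

/-- The factor of length `n` starting at position `s` of the infinite word `c`. -/
def seg {α : Type*} (c : ℕ → α) (s n : ℕ) : List α := (List.range n).map fun j => c (s + j)

theorem seg_length {α : Type*} (c : ℕ → α) (s n : ℕ) : (seg c s n).length = n := by simp [seg]

theorem seg_add {α : Type*} (c : ℕ → α) (s m n : ℕ) :
    seg c s (m + n) = seg c s m ++ seg c (s + m) n := by
  simp [seg, List.range_add, Function.comp_def, Nat.add_assoc]

theorem letter_mod {α : Type*} (u : List α) (h : u ≠ []) (s j : ℕ) :
    letter u h (s % u.length + j) = letter u h (s + j) := by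
  simp [letter]

theorem seg_mod {α : Type*} (u : List α) (h : u ≠ []) (s n : ℕ) :
    seg (letter u h) (s % u.length) n = seg (letter u h) s n := by
  simp [seg, letter_mod]

theorem wpow_eq_seg {α : Type*} (u : List α) (h : u ≠ []) (k : ℕ) :
    wpow u k = seg (letter u h) 0 (k * u.length) := by
  have hu : seg (letter u h) 0 u.length = u := by
    apply List.ext_getElem (seg_length _ _ _)
    intro i h1 h2
    simp [seg, letter, Nat.mod_eq_of_lt h2]
  induction k with
  | zero => simp [wpow, seg]
  | succ k ih =>
    rw [Nat.succ_mul, Nat.add_comm (k * _), seg_add, hu, ← seg_mod, Nat.zero_add, Nat.mod_self, ← ih]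
    rfl

theorem infix_seg {α : Type*} (c : ℕ → α) (N : ℕ) (v : List α) (hv : v <:+: seg c 0 N) :
    ∃ s, v = seg c s v.length := by
  obtain ⟨a, b, hab⟩ := hv
  refine ⟨a.length, ?_⟩
  have hN : N = a.length + v.length + b.length := by
    have := congrArg List.length hab
    simpa [seg_length, Nat.add_assoc] using this.symm
  rw [hN, seg_add, seg_add, Nat.zero_add] at hab
  have h1 := List.append_inj hab (by simp [seg_length])
  exact (List.append_inj h1.1 (by simp [seg_length])).2

theorem infix_wpow {α : Type*} (u : List α) (h : u ≠ []) (N : ℕ) (v : List α)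
    (hv : v <:+: wpow u N) : ∃ s < u.length, v = seg (letter u h) s v.length := by
  rw [wpow_eq_seg u h] at hv
  obtain ⟨s, hs⟩ := infix_seg _ _ _ hv
  exact ⟨s % u.length, Nat.mod_lt _ (List.length_pos_iff.2 h), by rw [seg_mod]; exact hs⟩

/-! ### Positions whose factor occurs in `w` -/

open Classical in
/-- The residues `s < |u|` such that the length-`n` factor of `u^ω` at position `s` occurs
in `w`. -/
noncomputable def goodPos {α : Type*} (w u : List α) (h : u ≠ []) (n : ℕ) : Finset ℕ :=
  (Finset.range u.length).filter fun s => seg (letter u h) s n <:+: w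

theorem mem_goodPos {α : Type*} {w u : List α} {h : u ≠ []} {n s : ℕ} :
    s ∈ goodPos w u h n ↔ s < u.length ∧ seg (letter u h) s n <:+: w := by
  simp [goodPos]

theorem goodPos_subset_range {α : Type*} (w u : List α) (h : u ≠ []) (n : ℕ) :
    goodPos w u h n ⊆ Finset.range u.length := fun _ hs => Finset.mem_range.2 (mem_goodPos.1 hs).1

theorem card_goodPos_le {α : Type*} (w u : List α) (h : u ≠ []) (n : ℕ) :
    (goodPos w u h n).card ≤ u.length := by
  simpa using Finset.card_le_card (goodPos_subset_range w u h n)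

theorem goodPos_succ_subset {α : Type*} (w u : List α) (h : u ≠ []) (n : ℕ) :
    goodPos w u h (n + 1) ⊆ goodPos w u h n := by
  intro s hs
  rw [mem_goodPos] at hs ⊢
  refine ⟨hs.1, List.IsInfix.trans ?_ hs.2⟩
  rw [seg_add]
  exact (List.prefix_append _ _).isInfix

theorem goodPos_antitone {α : Type*} (w u : List α) (h : u ≠ []) : Antitone (goodPos w u h) :=
  antitone_nat_of_succ_le (goodPos_succ_subset w u h)

theorem goodPos_shift {α : Type*} (w u : List α) (h : u ≠ []) (n s : ℕ)
    (hs : s ∈ goodPos w u h (n + 1)) : (s + 1) % u.length ∈ goodPos w u h n := by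
  rw [mem_goodPos] at hs ⊢
  refine ⟨Nat.mod_lt _ (List.length_pos_iff.2 h), List.IsInfix.trans ?_ hs.2⟩
  rw [seg_mod, Nat.add_comm n, seg_add]
  exact (List.suffix_append _ _).isInfix

/-- Once some residue is missing, the number of good residues drops strictly until it vanishes:
otherwise the good residues would form a proper nonempty set stable under the cyclic shift. -/
theorem card_goodPos_succ_lt {α : Type*} (w u : List α) (h : u ≠ []) (n : ℕ)
    (hmiss : ∃ t < u.length, t ∉ goodPos w u h n) :
    (goodPos w u h (n + 1)).card ≤ (goodPos w u h n).card - 1 := by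
  rcases (goodPos w u h n).eq_empty_or_nonempty with h0 | ⟨s, hs⟩
  · have := Finset.card_le_card (goodPos_succ_subset w u h n)
    simp [h0] at this
    simp [this]
  apply Nat.le_sub_one_of_lt
  apply Finset.card_lt_card
  refine (goodPos_succ_subset w u h n).ssubset_of_ne fun heq => ?_
  obtain ⟨t, ht, htn⟩ := hmiss
  have hsl := (mem_goodPos.1 hs).1
  have key : ∀ k, (s + k) % u.length ∈ goodPos w u h n := by
    intro k
    induction k with
    | zero => simpa [Nat.mod_eq_of_lt hsl] using hs
    | succ k ih =>
      rw [← heq] at ih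
      simpa [Nat.add_assoc] using goodPos_shift w u h n _ ih
  apply htn
  have := key (t + u.length - s)
  rwa [show s + (t + u.length - s) = t + u.length by omega, Nat.add_mod_right,
    Nat.mod_eq_of_lt ht] at this

theorem SC_le {α : Type*} {w u : List α} (h : u ≠ []) {q : ℕ} (hq : SC w u q) : q ≤ w.length := by
  have hl : q ≤ (wpow u (q + 1)).length := by
    rw [wpow_length]
    have := List.length_pos_iff.2 h
    nlinarith
  have h1 : (wpow u (q + 1)).take q ∈ PerFac u q :=
    ⟨by simpa using hl, (List.take_prefix _ _).isInfix⟩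
  have h2 := List.IsInfix.length_le (hq.2.1 h1)
  rwa [h1.1] at h2

/-- Among the `m + 1` values `q ∈ [ℓ, ℓ + m]`, where `m = M(u)`, one violates the small-circuit
condition, so a residue is missing at length `ℓ + m + 1`. -/
theorem exists_missing {α : Type*} (w u : List α) (h : u ≠ []) :
    ∃ t < u.length, t ∉ goodPos w u h (u.length + Mnum w u + 1) := by
  obtain ⟨q, hq1, hq2, hq⟩ : ∃ q, u.length ≤ q ∧ q ≤ u.length + Mnum w u ∧ ¬ SC w u q := by
    by_contra! hcon
    have hsub : (↑(Finset.Icc u.length (u.length + Mnum w u)) : Set ℕ) ⊆ {q | SC w u q} := by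
      intro q hq
      simp only [Finset.coe_Icc, Set.mem_Icc] at hq
      exact hcon q hq.1 hq.2
    have hfin : {q | SC w u q}.Finite :=
      (Set.finite_Iic w.length).subset fun q hq => SC_le h hq
    have := Set.ncard_le_ncard hsub hfin
    rw [Set.ncard_coe_finset, Nat.card_Icc] at this
    change _ ≤ Mnum w u at this
    omega
  have main : ∀ n, n ≤ q + 1 → ¬ PerFac u n ⊆ Fac w →
      ∃ t < u.length, t ∉ goodPos w u h (u.length + Mnum w u + 1) := by
    intro n hn hsub
    obtain ⟨v, hv, hvw⟩ := Set.not_subset.1 hsub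
    obtain ⟨s, hs, hvs⟩ := infix_wpow u h _ v hv.2
    refine ⟨s, hs, fun hgood => hvw ?_⟩
    have := (mem_goodPos.1 (goodPos_antitone w u h (show n ≤ _ by omega) hgood)).2
    rw [hv.1] at hvs
    rw [hvs]
    exact this
  by_cases h1 : PerFac u q ⊆ Fac w
  · exact main (q + 1) le_rfl fun h2 => hq ⟨hq1, h1, h2⟩
  · exact main q (Nat.le_succ q) h1

theorem card_goodPos_bound {α : Type*} (w u : List α) (h : u ≠ []) (n : ℕ) :
    (goodPos w u h n).card ≤ min u.length (2 * u.length + Mnum w u - n) := by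
  refine le_min (card_goodPos_le w u h n) ?_
  rcases le_or_gt n (u.length + Mnum w u) with hn | hn
  · have := card_goodPos_le w u h n
    omega
  obtain ⟨t, ht, hmiss⟩ := exists_missing w u h
  induction n, (show u.length + Mnum w u + 1 ≤ n from hn) using Nat.le_induction with
  | base =>
    have hlt : (goodPos w u h (u.length + Mnum w u + 1)).card < (Finset.range u.length).card := by
      apply Finset.card_lt_card
      refine Finset.ssubset_iff_subset_ne.2 ⟨goodPos_subset_range w u h _, fun heq => hmiss ?_⟩
      rw [heq]
      simpa using ht
    rw [Finset.card_range] at hlt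
    omega
  | succ n hn' ih =>
    have := card_goodPos_succ_lt w u h n ⟨t, ht, fun hg => hmiss (goodPos_antitone w u h hn' hg)⟩
    have := ih hn'
    omega

/-! ### Counting -/

theorem G_succ (l m : ℕ) : G l (m + 1) = G l m + min l (m + 1) := by
  have hd : (m + 1) * (m + 1 + 1) / 2 = m * (m + 1) / 2 + (m + 1) := by
    rw [show (m + 1) * (m + 1 + 1) = m * (m + 1) + (m + 1) * 2 by ring,
      Nat.add_mul_div_right _ _ (by norm_num)]
  unfold G
  rcases lt_trichotomy m l with hlt | rfl | hgt
  · rw [if_pos (by omega), if_pos hlt.le, hd, min_eq_right (by omega)]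
  · simp
  · rw [if_neg (by omega), if_neg (by omega), min_eq_left (by omega),
      Nat.sub_add_comm hgt.le]
    ring

theorem sum_min_le_G (l m K : ℕ) : ∑ i ∈ Finset.range K, min l (m - i) ≤ G l m := by
  induction m generalizing K with
  | zero => simp
  | succ m ih =>
    cases K with
    | zero => simp
    | succ K =>
      rw [Finset.sum_range_succ', G_succ]
      simpa using ih K

/-- A finite set of at most `G |u| M(u)` words contains every common factor of `w` and `u^ω` of
length at least `2|u|`. -/
theorem exists_finset {α : Type*} (w u : List α) (h : u ≠ []) :
    ∃ F : Finset (List α), (∀ v N, v <:+: w → v <:+: wpow u N → 2 * u.length ≤ v.length → v ∈ F) ∧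
      F.card ≤ G u.length (Mnum w u) := by
  classical
  refine ⟨(Finset.range (w.length + 1)).biUnion fun i =>
    (goodPos w u h (2 * u.length + i)).image fun s => seg (letter u h) s (2 * u.length + i),
    ?_, ?_⟩
  · intro v N hw hu hl
    obtain ⟨s, hs, hv⟩ := infix_wpow u h N v hu
    have hle := hw.length_le
    have he : 2 * u.length + (v.length - 2 * u.length) = v.length := by omega
    simp only [Finset.mem_biUnion, Finset.mem_range, Finset.mem_image]
    refine ⟨v.length - 2 * u.length, by omega, s, ?_, ?_⟩
    · rw [he, mem_goodPos, ← hv]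
      exact ⟨hs, hw⟩
    · rw [he, ← hv]
  · refine Finset.card_biUnion_le.trans (le_trans (Finset.sum_le_sum fun i _ => ?_)
      (sum_min_le_G u.length (Mnum w u) (w.length + 1)))
    refine Finset.card_image_le.trans ((card_goodPos_bound w u h _).trans_eq ?_)
    rw [Nat.add_sub_add_left]

/-- A rational power of exponent at least 2 of a power of a conjugate of `u` is a factor of `u^ω`
of length at least `2|u|`. -/
theorem ratPow_infix {α : Type*} {u r v : List α} {k : ℕ} (hk : 1 ≤ k) (hc : Conj r u)
    (hv : IsRatPow (wpow r k) v) :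
    2 * u.length ≤ v.length ∧ ∃ N, v <:+: wpow u N := by
  obtain ⟨-, j, p', hj, hp, -, rfl⟩ := hv
  obtain ⟨x, y, rfl, rfl⟩ := hc
  constructor
  · simp only [List.length_append, wpow_length]
    have : 2 * 1 ≤ j * k := Nat.mul_le_mul hj hk
    nlinarith
  · refine ⟨(j + 1) * k + 1, ?_⟩
    have h1 : wpow (wpow (x ++ y) k) j ++ p' <:+: wpow (x ++ y) ((j + 1) * k) := by
      rw [← wpow_wpow, wpow_add _ j 1]
      refine ((List.prefix_append_right_inj _).2 ?_).isInfix
      simpa [wpow] using hp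
    exact h1.trans ⟨y, x, wpow_conj x y _⟩

/-- For pairwise non-conjugate primitive words `u_1, …, u_t` whose squares are
factors of `w`, the number of distinct factors of `w` that are rational powers
of exponent at least 2 of some nonempty word whose primitive root is conjugate
to some `u_i` is at most `Σ G(ℓ_i, m_i)`. -/
theorem stmt_7 {α : Type*} (w : List α) (t : ℕ) (u : Fin t → List α)
    (hprim : ∀ i, Primitive (u i))
    (hsq : ∀ i, (u i ++ u i) <:+: w)
    (hnc : ∀ i j, i ≠ j → ¬ Conj (u i) (u j)) :
    Set.ncard {v : List α | v <:+: w ∧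
        ∃ (p r : List α) (k : ℕ) (i : Fin t),
          1 ≤ k ∧ Primitive r ∧ p = wpow r k ∧ Conj r (u i) ∧ IsRatPow p v} ≤
      ∑ i : Fin t, G (u i).length (Mnum w (u i)) := by
  classical
  choose F hF hcard using fun i => exists_finset w (u i) (hprim i).1
  have hsub : {v : List α | v <:+: w ∧
        ∃ (p r : List α) (k : ℕ) (i : Fin t),
          1 ≤ k ∧ Primitive r ∧ p = wpow r k ∧ Conj r (u i) ∧ IsRatPow p v} ⊆
      (↑(Finset.univ.biUnion F) : Set (List α)) := by
    rintro v ⟨hw, p, r, k, i, hk, -, rfl, hc, hv⟩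
    obtain ⟨hl, N, hN⟩ := ratPow_infix hk hc hv
    simp only [Finset.coe_biUnion, Set.mem_iUnion]
    exact ⟨i, Finset.mem_coe.2 (Finset.mem_univ i), Finset.mem_coe.2 (hF i v N hw hN hl)⟩
  calc _ ≤ (↑(Finset.univ.biUnion F) : Set (List α)).ncard :=
        Set.ncard_le_ncard hsub (Finset.finite_toSet _)
    _ = (Finset.univ.biUnion F).card := Set.ncard_coe_finset _
    _ ≤ ∑ i, (F i).card := Finset.card_biUnion_le
    _ ≤ _ := Finset.sum_le_sum fun i _ => hcard i
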